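/- Let Λ ⊂ M and Λ_t ⊂ M_t (t = 0,…,T) be weakly compact convex sets. There exists λ ∈ Λ whose marginal λ_t belongs to Λ_t for every t if and only if Σ_{t=0}^T σ_{Λ_t}(x_t) + σ_Λ(−Σ_{t=0}^T x_t∘π_t) ≥ 0 for all x ∈ ∏_{t=0}^T C_t. -/

import Mathlib

/-!
The condition is the Hahn–Banach criterion for a compact convex set of functionals to contain `0`.

A pair consisting of `λ ∈ Λ` and a family `λ_t ∈ Λ_t` defines the linear functional
`x ↦ ∑ t, ⟨λ_t, x_t⟩ - ⟨λ, ∑ t, x_t ∘ π_t⟩` on `∏ t, C_t`. Bounded continuous functions separate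
finite signed Borel measures and the weights are at least `1`, so this functional vanishes exactly
when each `λ_t` is the `t`-th marginal of `λ` (`map_eq_of_wPair`). The functionals obtained in this
way form a convex set, compact for pointwise convergence, and the inequality of the theorem says
that its support function is nonnegative, the suprema being attained (`exists_iSup_eq`). Such a set
contains `0` (`zero_mem_of_support_nonneg`).

Convexity requires the pairing to be affine in the measure, although the Jordan decomposition is
not additive; `sInt_eq_sub` computes the integral from an arbitrary decomposition into a difference
of finite measures. The converse direction is change of variables (`wPair_embedT`): evaluating the
suprema at `λ` and its marginals already gives `0`.
-/

open MeasureTheory Filter Set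
open scoped ENNReal

noncomputable section

/-- The positive part of an extended real number, as an extended nonnegative real. -/
def EReal.posPart' (x : EReal) : ℝ≥0∞ := if x = ⊤ then ⊤ else ENNReal.ofReal x.toReal

/-- Integral of an `EReal`-valued function, with the convention that the value is `⊤`
whenever the positive part fails to be integrable. -/
def eInt {X : Type*} [MeasurableSpace X] (μ : Measure X) (f : X → EReal) : EReal :=
  if (∫⁻ s, (f s).posPart' ∂μ) = ⊤ then ⊤
  else ((∫⁻ s, (f s).posPart' ∂μ : ℝ≥0∞) : EReal) -
    ((∫⁻ s, (-(f s)).posPart' ∂μ : ℝ≥0∞) : EReal)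

/-- Integral of a real function against a finite signed measure, via the Jordan
decomposition. -/
def sInt {X : Type*} [MeasurableSpace X] (m : SignedMeasure X) (f : X → ℝ) : ℝ :=
  ∫ s, f s ∂m.toJordanDecomposition.posPart - ∫ s, f s ∂m.toJordanDecomposition.negPart

/-- Convexity of an extended-real-valued function on a real vector space. -/
def EConvexOn {E : Type*} [AddCommGroup E] [Module ℝ E] (k : E → EReal) : Prop :=
  ∀ x y : E, ∀ a b : ℝ, 0 ≤ a → 0 ≤ b → a + b = 1 →
    k (a • x + b • y) ≤ (a : EReal) * k x + (b : EReal) * k y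

/-- Properness of an extended-real-valued function: it is nowhere `−∞` and somewhere
finite. -/
def EProper {E : Type*} (k : E → EReal) : Prop := (∃ x, k x ≠ ⊤) ∧ ∀ x, k x ≠ ⊥

/-- The recession function `k^∞` of a (convex lsc) function `k`:
`k^∞(x) = sup_{α>0} (k(x̄ + αx) − k(x̄))/α`, the supremum being taken also over all
points `x̄` of the domain of `k` (for convex lsc `k` it does not depend on `x̄`). -/
def erec {E : Type*} [AddCommGroup E] [Module ℝ E] (k : E → EReal) (x : E) : EReal :=
  ⨆ (y : E) (_ : k y < ⊤) (a : ℝ) (_ : 0 < a),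
    (((a⁻¹ : ℝ)) : EReal) * (k (y + a • x) - k y)

/-- The l.s.c. hull of the domain membership:  here simply the closure of the domain. -/
def edom {E : Type*} [TopologicalSpace E] (k : E → EReal) : Set E := closure {x | k x < ⊤}

/-- `v` belongs to the subdifferential `∂k(x)` (w.r.t. the euclidean pairing). -/
def ESubdiffAt {ι : Type*} [Fintype ι] (k : (ι → ℝ) → EReal) (x v : ι → ℝ) : Prop :=
  ∀ y : ι → ℝ, k x + ((∑ i, v i * (y i - x i) : ℝ) : EReal) ≤ k y

/-- `v` belongs to the normal cone `N_D(x)` of `D` at `x`. -/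
def InNormalCone {ι : Type*} [Fintype ι] (D : Set (ι → ℝ)) (x v : ι → ℝ) : Prop :=
  x ∈ D ∧ ∀ y ∈ D, (∑ i, v i * (y i - x i)) ≤ 0

/-- A property of points of `S = ∏ t, S t` holds `(μ_t)`-almost everywhere if it holds on
a Cartesian product of sets of full measure. -/
def ProdAE {T : ℕ} {S : Fin (T + 1) → Type*} [∀ t, MeasurableSpace (S t)]
    (μt : ∀ t, Measure (S t)) (P : (∀ t, S t) → Prop) : Prop :=
  ∃ A : ∀ t, Set (S t), (∀ t, MeasurableSet (A t) ∧ μt t (A t) = 1) ∧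
    ∀ s ∈ Set.univ.pi A, P s

/-- A set-valued mapping `D : S ⇉ ℝ^d` is inner semicontinuous if the preimage of every
open set is open. -/
def InnerSemicontinuous {X E : Type*} [TopologicalSpace X] [TopologicalSpace E]
    (D : X → Set E) : Prop :=
  ∀ O : Set E, IsOpen O → IsOpen {x | (D x ∩ O).Nonempty}

end

noncomputable section Weighted

open MeasureTheory Filter Set BoundedContinuousFunction

variable {T d : ℕ} {S : Fin (T + 1) → Type*} [∀ t, TopologicalSpace (S t)]

/-- The weight `ψ(s) = ∑_t ψ_t(s_t)` on the product space. -/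
def psiS (ψt : ∀ t, S t → ℝ) (s : ∀ t, S t) : ℝ := ∑ t, ψt t (s t)

lemma psiS_pos (ψt : ∀ t, S t → ℝ) (hψ1 : ∀ t st, 1 ≤ ψt t st) (s : ∀ t, S t) :
    0 < psiS ψt s := by
  have h : (1 : ℝ) ≤ psiS ψt s :=
    le_trans (hψ1 0 (s 0))
      (Finset.single_le_sum (f := fun t => ψt t (s t))
        (fun r _ => le_trans zero_le_one (hψ1 r (s r))) (Finset.mem_univ 0))
  linarith

lemma psiS_cont (ψt : ∀ t, S t → ℝ) (hψc : ∀ t, Continuous (ψt t)) :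
    Continuous (psiS ψt) :=
  continuous_finset_sum _ (fun t _ => (hψc t).comp (continuous_apply t))

/-- The canonical embedding `C_t → C`, `x_t ↦ x_t ∘ π_t`, in the normalized
representation in which an element `x` of the weighted space `C_t` is represented by
the bounded continuous function `x/ψ_t` (so an element `u` of `C` represents the
function `s ↦ ψ(s) • u(s)`). -/
def embedT (ψt : ∀ t, S t → ℝ) (hψc : ∀ t, Continuous (ψt t))
    (hψ1 : ∀ t st, 1 ≤ ψt t st) (t : Fin (T + 1)) (x : S t →ᵇ (Fin d → ℝ)) :
    (∀ r, S r) →ᵇ (Fin d → ℝ) :=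
  BoundedContinuousFunction.ofNormedAddCommGroup
    (fun s => (ψt t (s t) / psiS ψt s) • x (s t))
    (by
      have h1 : Continuous fun s : ∀ r, S r => ψt t (s t) := (hψc t).comp (continuous_apply t)
      have h2 : Continuous (psiS ψt) := psiS_cont ψt hψc
      have h3 : Continuous fun s : ∀ r, S r => x (s t) := x.continuous.comp (continuous_apply t)
      exact (h1.div h2 fun s => (psiS_pos ψt hψ1 s).ne').smul h3)
    ‖x‖
    (by
      intro s
      have hpos := psiS_pos ψt hψ1 s
      have hle : ψt t (s t) / psiS ψt s ≤ 1 := by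
        rw [div_le_one hpos]
        exact Finset.single_le_sum (f := fun r => ψt r (s r))
          (fun r _ => le_trans zero_le_one (hψ1 r (s r))) (Finset.mem_univ t)
      have h0 : 0 ≤ ψt t (s t) / psiS ψt s :=
        div_nonneg (le_trans zero_le_one (hψ1 t (s t))) hpos.le
      calc ‖(ψt t (s t) / psiS ψt s) • x (s t)‖
          = |ψt t (s t) / psiS ψt s| * ‖x (s t)‖ := by
            rw [norm_smul, Real.norm_eq_abs]
        _ ≤ 1 * ‖x‖ := by
            apply mul_le_mul (by rwa [abs_of_nonneg h0]) (x.norm_coe_le_norm _)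
              (norm_nonneg _) zero_le_one
        _ = ‖x‖ := one_mul _)

end Weighted

section Helpers

open MeasureTheory BoundedContinuousFunction
open scoped NNReal

/-! ### Integration against a signed measure -/

section SignedIntegral

variable {X Y : Type*} [MeasurableSpace X] [MeasurableSpace Y]

lemma jordan_sub (m : SignedMeasure X) :
    m = m.toJordanDecomposition.posPart.toSignedMeasure -
      m.toJordanDecomposition.negPart.toSignedMeasure :=
  (SignedMeasure.toSignedMeasure_toJordanDecomposition m).symm

lemma integrable_jordan {m : SignedMeasure X} {f : X → ℝ}
    (hf : Integrable f m.totalVariation) :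
    Integrable f m.toJordanDecomposition.posPart ∧
      Integrable f m.toJordanDecomposition.negPart :=
  integrable_add_measure.1 hf

/-- The signed integral may be computed from any decomposition of the signed measure as a
difference of finite measures, not only from the Jordan decomposition. This is what makes
`sInt` additive in the measure, although the Jordan decomposition is not. -/
lemma sInt_eq_sub {m : SignedMeasure X} {μ ν : Measure X} [IsFiniteMeasure μ]
    [IsFiniteMeasure ν] (hm : m = μ.toSignedMeasure - ν.toSignedMeasure) {f : X → ℝ}
    (hf : Integrable f m.totalVariation) (hμ : Integrable f μ) (hν : Integrable f ν) :
    sInt m f = ∫ s, f s ∂μ - ∫ s, f s ∂ν := by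
  obtain ⟨hp, hn⟩ := integrable_jordan hf
  have h : m.toJordanDecomposition.posPart + ν = m.toJordanDecomposition.negPart + μ := by
    rw [← Measure.toSignedMeasure_eq_toSignedMeasure_iff, Measure.toSignedMeasure_add,
      Measure.toSignedMeasure_add]
    have h1 := (jordan_sub m).symm.trans hm
    rw [sub_eq_sub_iff_add_eq_add] at h1
    rw [h1, add_comm]
  have h2 : ∫ s, f s ∂(m.toJordanDecomposition.posPart + ν) =
      ∫ s, f s ∂(m.toJordanDecomposition.negPart + μ) := by rw [h]
  rw [integral_add_measure hp hν, integral_add_measure hn hμ] at h2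
  rw [sInt]
  linarith

lemma sInt_convex {m n : SignedMeasure X} {f : X → ℝ} {a b : ℝ} (ha : 0 ≤ a) (hb : 0 ≤ b)
    (hm : Integrable f m.totalVariation) (hn : Integrable f n.totalVariation)
    (hmn : Integrable f (a • m + b • n).totalVariation) :
    sInt (a • m + b • n) f = a * sInt m f + b * sInt n f := by
  lift a to ℝ≥0 using ha
  lift b to ℝ≥0 using hb
  obtain ⟨hp, hq⟩ := integrable_jordan hm
  obtain ⟨hp', hq'⟩ := integrable_jordan hn
  have key : (a : ℝ) • m + (b : ℝ) • n =
      (a • m.toJordanDecomposition.posPart +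
        b • n.toJordanDecomposition.posPart).toSignedMeasure -
      (a • m.toJordanDecomposition.negPart +
        b • n.toJordanDecomposition.negPart).toSignedMeasure := by
    simp only [Measure.toSignedMeasure_add, Measure.toSignedMeasure_smul]
    conv_lhs => rw [jordan_sub m, jordan_sub n]
    simp only [NNReal.smul_def, smul_sub]
    abel
  have i1 := hp.smul_measure_nnreal (c := a)
  have i2 := hq.smul_measure_nnreal (c := a)
  have i3 := hp'.smul_measure_nnreal (c := b)
  have i4 := hq'.smul_measure_nnreal (c := b)
  rw [sInt_eq_sub key hmn (i1.add_measure i3) (i2.add_measure i4),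
    integral_add_measure i1 i3, integral_add_measure i2 i4]
  simp only [integral_smul_nnreal_measure, NNReal.smul_def, smul_eq_mul, sInt]
  ring

lemma sInt_add {m : SignedMeasure X} {f g : X → ℝ} (hf : Integrable f m.totalVariation)
    (hg : Integrable g m.totalVariation) :
    sInt m (fun s => f s + g s) = sInt m f + sInt m g := by
  obtain ⟨hf1, hf2⟩ := integrable_jordan hf
  obtain ⟨hg1, hg2⟩ := integrable_jordan hg
  rw [sInt, integral_add hf1 hg1, integral_add hf2 hg2, sInt, sInt]
  ring

lemma sInt_const_mul (m : SignedMeasure X) (c : ℝ) (f : X → ℝ) :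
    sInt m (fun s => c * f s) = c * sInt m f := by
  rw [sInt, integral_const_mul, integral_const_mul, sInt]
  ring

/-- Change of variables for the signed integral. -/
lemma sInt_map {m : SignedMeasure X} {p : X → Y} (hp : Measurable p) {f : Y → ℝ}
    (hf : Measurable f) (h1 : Integrable (fun s => f (p s)) m.totalVariation)
    (h2 : Integrable f (SignedMeasure.totalVariation (m.map p))) :
    sInt (m.map p) f = sInt m (fun s => f (p s)) := by
  obtain ⟨i1, i2⟩ := integrable_jordan h1
  have key : m.map p = (m.toJordanDecomposition.posPart.map p).toSignedMeasure -
      (m.toJordanDecomposition.negPart.map p).toSignedMeasure := by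
    ext s hs
    rw [VectorMeasure.map_apply _ hp hs, Measure.toSignedMeasure_sub_apply hs,
      map_measureReal_apply hp hs, map_measureReal_apply hp hs]
    conv_lhs => rw [jordan_sub m]
    rw [Measure.toSignedMeasure_sub_apply (hp hs)]
  have j1 : Integrable f (m.toJordanDecomposition.posPart.map p) :=
    (integrable_map_measure hf.aestronglyMeasurable hp.aemeasurable).2 i1
  have j2 : Integrable f (m.toJordanDecomposition.negPart.map p) :=
    (integrable_map_measure hf.aestronglyMeasurable hp.aemeasurable).2 i2
  rw [sInt_eq_sub key h2 j1 j2, integral_map hp.aemeasurable hf.aestronglyMeasurable,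
    integral_map hp.aemeasurable hf.aestronglyMeasurable, sInt]

/-- A finite signed Borel measure is determined by the integrals of bounded continuous
functions. -/
lemma signed_ext [TopologicalSpace X] [HasOuterApproxClosed X] [BorelSpace X]
    {m n : SignedMeasure X} (h : ∀ g : X →ᵇ ℝ, sInt m g = sInt n g) : m = n := by
  have h1 : m.toJordanDecomposition.posPart + n.toJordanDecomposition.negPart =
      n.toJordanDecomposition.posPart + m.toJordanDecomposition.negPart := by
    refine ext_of_forall_integral_eq_of_IsFiniteMeasure fun g => ?_
    rw [integral_add_measure (g.integrable _) (g.integrable _),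
      integral_add_measure (g.integrable _) (g.integrable _)]
    have := h g
    simp only [sInt] at this
    linarith
  rw [jordan_sub m, jordan_sub n, sub_eq_sub_iff_add_eq_add, ← Measure.toSignedMeasure_add,
    ← Measure.toSignedMeasure_add]
  exact Measure.toSignedMeasure_congr h1

end SignedIntegral

/-! ### The weighted pairing -/

section Pairing

variable {X : Type*} [TopologicalSpace X] {d : ℕ}

/-- For a weight `w ≥ 1`, every bounded continuous function has the form `w * u` with `u` bounded
and continuous, so the weighted pairing determines the integrals of all such functions. -/
lemma exists_weighted_single {w : X → ℝ} (hw : Continuous w) (hw1 : ∀ s, 1 ≤ w s) (i : Fin d)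
    (g : X →ᵇ ℝ) :
    ∃ u : X →ᵇ (Fin d → ℝ), ∀ s j, w s * u s j = if j = i then g s else 0 := by
  have hpos : ∀ s, 0 < w s := fun s => zero_lt_one.trans_le (hw1 s)
  refine ⟨BoundedContinuousFunction.ofNormedAddCommGroup
    (fun s => Pi.single i (g s / w s)) ?_ ‖g‖ ?_, ?_⟩
  · exact (continuous_single i).comp (g.continuous.div hw fun s => (hpos s).ne')
  · intro s
    refine (Pi.norm_single (G := fun _ : Fin d => ℝ) (i := i) (g s / w s)).le.trans ?_
    rw [norm_div, Real.norm_of_nonneg (hpos s).le]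
    exact (div_le_self (norm_nonneg _) (hw1 s)).trans (g.norm_coe_le_norm s)
  · intro s j
    rw [BoundedContinuousFunction.coe_ofNormedAddCommGroup, Pi.single_apply]
    split_ifs
    · exact mul_div_cancel₀ _ (hpos s).ne'
    · exact mul_zero _

variable [MeasurableSpace X] [OpensMeasurableSpace X]

/-- The pairing of an `ℝ^d`-valued measure `m` with the function `w • u`, where `w` is a weight
and `u` is bounded and continuous. -/
noncomputable def wPair (w : X → ℝ) (m : Fin d → SignedMeasure X) (u : X →ᵇ (Fin d → ℝ)) : ℝ :=
  ∑ i, sInt (m i) (fun s => w s * u s i)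

lemma integrable_weighted {w : X → ℝ} (hw : Continuous w) {μ : Measure X}
    (hμ : Integrable w μ) (u : X →ᵇ (Fin d → ℝ)) (i : Fin d) :
    Integrable (fun s => w s * u s i) μ := by
  have hm : Measurable fun s => w s * u s i :=
    (hw.mul ((continuous_apply i).comp u.continuous)).measurable
  refine Integrable.mono' (hμ.norm.mul_const ‖u‖) hm.aestronglyMeasurable
    (Filter.Eventually.of_forall fun s => ?_)
  rw [norm_mul]
  exact mul_le_mul_of_nonneg_left ((norm_le_pi_norm (u s) i).trans (u.norm_coe_le_norm s))
    (norm_nonneg _)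

lemma wPair_convex {w : X → ℝ} (hw : Continuous w) {m n : Fin d → SignedMeasure X} {a b : ℝ}
    (ha : 0 ≤ a) (hb : 0 ≤ b) (hm : ∀ i, Integrable w (m i).totalVariation)
    (hn : ∀ i, Integrable w (n i).totalVariation)
    (hmn : ∀ i, Integrable w ((a • m + b • n) i).totalVariation) (u : X →ᵇ (Fin d → ℝ)) :
    wPair w (a • m + b • n) u = a * wPair w m u + b * wPair w n u := by
  simp only [wPair, Finset.mul_sum, ← Finset.sum_add_distrib]
  exact Finset.sum_congr rfl fun i _ => sInt_convex ha hb (integrable_weighted hw (hm i) u i)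
    (integrable_weighted hw (hn i) u i) (integrable_weighted hw (hmn i) u i)

lemma wPair_isLinear {w : X → ℝ} (hw : Continuous w) {m : Fin d → SignedMeasure X}
    (hm : ∀ i, Integrable w (m i).totalVariation) : IsLinearMap ℝ (wPair w m) where
  map_add u v := by
    simp only [wPair, ← Finset.sum_add_distrib]
    refine Finset.sum_congr rfl fun i _ => ?_
    rw [← sInt_add (integrable_weighted hw (hm i) u i) (integrable_weighted hw (hm i) v i)]
    simp [mul_add]
  map_smul c u := by
    simp only [wPair, smul_eq_mul, Finset.mul_sum]
    refine Finset.sum_congr rfl fun i _ => ?_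
    rw [← sInt_const_mul]
    simp [mul_left_comm]

/-- The functionals on the function space given by a convex set of measures form a convex set. -/
lemma wPair_image_convex {w : X → ℝ} (hw : Continuous w) {L : Set (Fin d → SignedMeasure X)}
    (hL : Convex ℝ L) (hLw : ∀ m ∈ L, ∀ i, Integrable w (m i).totalVariation) :
    Convex ℝ (wPair w '' L) := by
  rintro _ ⟨m, hm, rfl⟩ _ ⟨n, hn, rfl⟩ a b ha hb hab
  refine ⟨a • m + b • n, hL hm hn ha hb hab, ?_⟩
  funext u
  exact wPair_convex hw ha hb (hLw m hm) (hLw n hn) (hLw _ (hL hm hn ha hb hab)) u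

end Pairing

/-! ### Separation in a space of functionals -/

/-- A compact convex set `K` of linear functionals on `V`, for the topology of pointwise
convergence, contains `0` as soon as its support function is nonnegative. By compactness it is
enough to find an element of `K` vanishing at finitely many given points, which is a separation
problem in finite dimension. -/
lemma zero_mem_of_support_nonneg {V : Type*} [AddCommGroup V] [Module ℝ V] {K : Set (V → ℝ)}
    (hK : IsCompact K) (hconv : Convex ℝ K) (hlin : ∀ y ∈ K, IsLinearMap ℝ y)
    (h : ∀ x, ∃ y ∈ K, 0 ≤ y x) : (0 : V → ℝ) ∈ K := by
  obtain ⟨y, hyK, hy⟩ := hK.inter_iInter_nonempty (fun x : V => {y : V → ℝ | y x = 0})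
    (fun x => isClosed_eq (continuous_apply x) continuous_const) (by
      classical
      intro F
      let R : (V → ℝ) →ₗ[ℝ] (F → ℝ) := LinearMap.funLeft ℝ ℝ (Subtype.val : F → V)
      have hR : Continuous R := continuous_pi fun x => continuous_apply (x : V)
      have h0 : (0 : F → ℝ) ∈ R '' K := by
        by_contra h0
        obtain ⟨f, c, hf, hc⟩ := geometric_hahn_banach_closed_point (hconv.linear_image R)
          (hK.image hR).isClosed h0
        rw [map_zero] at hc
        obtain ⟨y, hyK, hy⟩ := h (∑ x : F, f (Pi.single x 1) • (x : V))
        have h1 : y (∑ x : F, f (Pi.single x 1) • (x : V)) = f (R y) := by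
          have h2 := LinearMap.pi_apply_eq_sum_univ (f : (F → ℝ) →ₗ[ℝ] ℝ) (R y)
          have h3 := map_sum (IsLinearMap.mk' y (hlin y hyK))
            (fun x : F => f (Pi.single x 1) • (x : V)) Finset.univ
          simp only [IsLinearMap.mk'_apply] at h3
          rw [h3]
          refine Eq.trans ?_ h2.symm
          refine Finset.sum_congr rfl fun x _ => ?_
          rw [(hlin y hyK).map_smul, smul_eq_mul, smul_eq_mul, mul_comm]
          refine congrArg (R y x * ·) (congrArg f (funext fun j => ?_))
          simp [Pi.single_apply, eq_comm]
        have := hf _ ⟨y, hyK, rfl⟩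
        linarith
      obtain ⟨y, hyK, hy⟩ := h0
      refine ⟨y, hyK, ?_⟩
      simp only [Set.mem_iInter]
      exact fun x hx => congrFun hy ⟨x, hx⟩)
  have : y = 0 := funext fun x => Set.mem_iInter.1 hy x
  exact this ▸ hyK

lemma ereal_coe_sum {ι : Type*} (s : Finset ι) (f : ι → ℝ) :
    ((∑ i ∈ s, f i : ℝ) : EReal) = ∑ i ∈ s, (f i : EReal) := by
  classical
  induction s using Finset.induction_on with
  | empty => simp
  | insert i s hi ih => rw [Finset.sum_insert hi, Finset.sum_insert hi, EReal.coe_add, ih]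

/-- The support function of a nonempty weakly compact set is attained. -/
lemma exists_iSup_eq {M V : Type*} {p : M → V → ℝ} {L : Set M} (hL : IsCompact (p '' L))
    (hne : L.Nonempty) (x : V) : ∃ m ∈ L, (⨆ n ∈ L, ((p n x : ℝ) : EReal)) = (p m x : ℝ) := by
  obtain ⟨_, ⟨m, hm, rfl⟩, hmax⟩ := hL.exists_isMaxOn (hne.image p)
    (continuous_apply x).continuousOn
  refine ⟨m, hm, le_antisymm (iSup₂_le fun n hn => ?_)
    (le_iSup₂ (f := fun n (_ : n ∈ L) => ((p n x : ℝ) : EReal)) m hm)⟩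
  exact EReal.coe_le_coe_iff.2 (hmax ⟨n, hn, rfl⟩)

/-! ### The embedding of the marginal function spaces -/

section Embedding

variable {T d : ℕ} {S : Fin (T + 1) → Type*} [∀ t, TopologicalSpace (S t)]
  (ψt : ∀ t, S t → ℝ) (hψc : ∀ t, Continuous (ψt t)) (hψ1 : ∀ t st, 1 ≤ ψt t st)

lemma psiS_mul_embedT (t : Fin (T + 1)) (x : S t →ᵇ (Fin d → ℝ)) (s : ∀ t, S t) (i : Fin d) :
    psiS ψt s * embedT ψt hψc hψ1 t x s i = ψt t (s t) * x (s t) i := by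
  have hpos := (psiS_pos ψt hψ1 s).ne'
  change psiS ψt s * ((ψt t (s t) / psiS ψt s) * x (s t) i) = _
  field_simp

lemma embedT_isLinear (t : Fin (T + 1)) :
    IsLinearMap ℝ (embedT (d := d) ψt hψc hψ1 t) where
  map_add x y := by
    ext s i
    exact mul_add _ _ _
  map_smul c x := by
    ext s i
    exact mul_left_comm _ _ _

/-- The pairing with an embedded function is the pairing of the marginal with the function. -/
lemma wPair_embedT [∀ t, MeasurableSpace (S t)] [∀ t, OpensMeasurableSpace (S t)]
    [OpensMeasurableSpace (∀ t, S t)] {m : Fin d → SignedMeasure (∀ t, S t)}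
    (hm : ∀ i, Integrable (psiS ψt) (m i).totalVariation) (t : Fin (T + 1))
    (hmt : ∀ i, Integrable (ψt t) (SignedMeasure.totalVariation ((m i).map (fun s => s t))))
    (x : S t →ᵇ (Fin d → ℝ)) :
    wPair (psiS ψt) m (embedT ψt hψc hψ1 t x) =
      wPair (ψt t) (fun i => (m i).map (fun s => s t)) x := by
  refine Finset.sum_congr rfl fun i _ => ?_
  have h1 := integrable_weighted (psiS_cont ψt hψc) (hm i) (embedT ψt hψc hψ1 t x) i
  simp only [psiS_mul_embedT] at h1 ⊢
  exact (sInt_map (f := fun st => ψt t st * x st i) (measurable_pi_apply t)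
    ((hψc t).mul ((continuous_apply i).comp x.continuous)).measurable h1
    (integrable_weighted (hψc t) (hmt i) x i)).symm

/-- If `m` and `n` pair equally with `x ∘ π_t` and `x` for every `x` in the weighted space, then
`n` is the `t`-th marginal of `m`. No weighted integrability is needed, since bounded continuous
test functions suffice. -/
lemma map_eq_of_wPair [∀ t, MeasurableSpace (S t)] [∀ t, BorelSpace (S t)]
    {m : Fin d → SignedMeasure (∀ t, S t)} (t : Fin (T + 1)) [HasOuterApproxClosed (S t)]
    {n : Fin d → SignedMeasure (S t)}
    (h : ∀ x : S t →ᵇ (Fin d → ℝ),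
      wPair (ψt t) n x = wPair (psiS ψt) m (embedT ψt hψc hψ1 t x)) :
    (fun i => (m i).map (fun s => s t)) = n := by
  funext i
  refine signed_ext fun g => ?_
  have hg : Integrable (fun s : ∀ t, S t => g (s t)) (m i).totalVariation :=
    Integrable.of_bound
      (g.continuous.measurable.comp (measurable_pi_apply t)).aestronglyMeasurable ‖g‖
      (Filter.Eventually.of_forall fun s => g.norm_coe_le_norm (s t))
  rw [sInt_map (measurable_pi_apply t) g.continuous.measurable hg (g.integrable _)]
  obtain ⟨x, hx⟩ := exists_weighted_single (hψc t) (hψ1 t) i g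
  have h1 := h x
  simp only [wPair, psiS_mul_embedT, hx] at h1
  rw [Finset.sum_eq_single i (fun j _ hj => by simp [hj, sInt]) (by simp),
    Finset.sum_eq_single i (fun j _ hj => by simp [hj, sInt]) (by simp)] at h1
  simpa using h1.symm

end Embedding

end Helpers

noncomputable section

open MeasureTheory Filter Set BoundedContinuousFunction
open scoped ENNReal

set_option maxHeartbeats 1000000 in
/-- **Theorem (existence of measures with given marginals, à la Strassen).**
Let `Λ ⊆ M` and `Λ_t ⊆ M_t` be weakly compact convex sets of `ℝ^d`-valued Borel
measures (the weak topologies being induced by the pairings with the weighted spaces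
`C` and `C_t`).  There exists `λ ∈ Λ` with marginals `λ_t ∈ Λ_t` for all `t` if and
only if `∑_t σ_{Λ_t}(x_t) + σ_Λ(−∑_t x_t∘π_t) ≥ 0` for all `x ∈ ∏_t C_t`. -/
theorem stmt2
    {T d : ℕ} (S : Fin (T + 1) → Type*)
    [∀ t, TopologicalSpace (S t)] [∀ t, PolishSpace (S t)]
    [∀ t, MeasurableSpace (S t)] [∀ t, BorelSpace (S t)]
    (ψt : ∀ t, S t → ℝ) (hψc : ∀ t, Continuous (ψt t)) (hψ1 : ∀ t st, 1 ≤ ψt t st)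
    -- the pairings of measures with the weighted spaces `C` and `C_t`
    (pairS : (Fin d → SignedMeasure (∀ t, S t)) → ((∀ t, S t) →ᵇ (Fin d → ℝ)) → ℝ)
    (hpairS : pairS = fun m u => ∑ i, sInt (m i) (fun s => psiS ψt s * u s i))
    (pairT : ∀ t : Fin (T + 1), (Fin d → SignedMeasure (S t)) → (S t →ᵇ (Fin d → ℝ)) → ℝ)
    (hpairT : pairT = fun t m x => ∑ i, sInt (m i) (fun st => ψt t st * x st i))
    -- `Λ ⊆ M` and `Λ_t ⊆ M_t`, convex and weakly compact
    (Λ : Set (Fin d → SignedMeasure (∀ t, S t)))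
    (hΛM : ∀ m ∈ Λ, ∀ i, Integrable (psiS ψt) (m i).totalVariation)
    (hΛconv : Convex ℝ Λ)
    (hΛcomp : @IsCompact _ (TopologicalSpace.induced pairS inferInstance) Λ)
    (Λt : ∀ t : Fin (T + 1), Set (Fin d → SignedMeasure (S t)))
    (hΛtM : ∀ t, ∀ m ∈ Λt t, ∀ i, Integrable (ψt t) (m i).totalVariation)
    (hΛtconv : ∀ t, Convex ℝ (Λt t))
    (hΛtcomp : ∀ t, @IsCompact _ (TopologicalSpace.induced (pairT t) inferInstance) (Λt t)) :
    -- existence of `λ ∈ Λ` with `λ_t ∈ Λ_t` iff the support-function inequality holds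
    (∃ lam ∈ Λ, ∀ t, (fun i => (lam i).map (fun s => s t)) ∈ Λt t) ↔
      (∀ x : ∀ t, S t →ᵇ (Fin d → ℝ),
        0 ≤ (∑ t, ⨆ m ∈ Λt t, ((pairT t m (x t) : ℝ) : EReal)) +
          ⨆ m ∈ Λ, ((pairS m (-(∑ t, embedT ψt hψc hψ1 t (x t))) : ℝ) : EReal)) := by
  have hpS : pairS = wPair (psiS ψt) := hpairS
  have hpT : pairT = fun t => wPair (ψt t) := hpairT
  clear hpairS hpairT
  subst hpS hpT
  have hψ : Continuous (psiS ψt) := psiS_cont ψt hψc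
  constructor
  · rintro ⟨lam, hlam, hmarg⟩ x
    have hlin := wPair_isLinear hψ (hΛM lam hlam)
    have h0 : (∑ t, wPair (ψt t) (fun i => (lam i).map (fun s => s t)) (x t)) +
        wPair (psiS ψt) lam (-(∑ t, embedT ψt hψc hψ1 t (x t))) = 0 := by
      have h1 := map_sum (IsLinearMap.mk' _ hlin) (fun t => embedT ψt hψc hψ1 t (x t)) Finset.univ
      simp only [IsLinearMap.mk'_apply] at h1
      rw [hlin.map_neg, h1, ← sub_eq_add_neg, sub_eq_zero]
      exact Finset.sum_congr rfl fun t _ => (wPair_embedT ψt hψc hψ1 (hΛM lam hlam) t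
        (hΛtM t _ (hmarg t)) (x t)).symm
    rw [← EReal.coe_zero, ← h0, EReal.coe_add, ereal_coe_sum]
    refine add_le_add (Finset.sum_le_sum fun t _ => ?_) ?_
    · exact le_iSup₂ (f := fun n (_ : n ∈ Λt t) => ((wPair (ψt t) n (x t) : ℝ) : EReal)) _
        (hmarg t)
    · exact le_iSup₂ (f := fun n (_ : n ∈ Λ) =>
        ((wPair (psiS ψt) n (-(∑ t, embedT ψt hψc hψ1 t (x t))) : ℝ) : EReal)) _ hlam
  · intro H
    -- An empty constraint set would make one support function `⊥`, and `⊥` absorbs addition.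
    have hΛne : Λ.Nonempty := by
      by_contra hne
      rw [Set.not_nonempty_iff_eq_empty] at hne
      have := H 0
      simp [hne] at this
    have hΛtne : ∀ t, (Λt t).Nonempty := by
      intro t
      by_contra hne
      rw [Set.not_nonempty_iff_eq_empty] at hne
      have := H 0
      rw [← Finset.add_sum_erase _ _ (Finset.mem_univ t)] at this
      simp [hne] at this
    have hA : IsCompact (wPair (psiS ψt) '' Λ) :=
      @IsCompact.image _ _ (TopologicalSpace.induced (wPair (psiS ψt)) inferInstance) _ _ _
        hΛcomp continuous_induced_dom
    have hB : ∀ t, IsCompact (wPair (ψt t) '' Λt t) := fun t =>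
      @IsCompact.image _ _ (TopologicalSpace.induced (wPair (ψt t)) inferInstance) _ _ _
        (hΛtcomp t) continuous_induced_dom
    -- `Φ (a, b)` is the functional `x ↦ ∑ t, b t (x t) - a (∑ t, x t ∘ π t)`.
    let Φ : ((((∀ t, S t) →ᵇ (Fin d → ℝ)) → ℝ) × (∀ t, (S t →ᵇ (Fin d → ℝ)) → ℝ)) →ₗ[ℝ]
        ((∀ t, S t →ᵇ (Fin d → ℝ)) → ℝ) :=
      { toFun := fun q x => (∑ t, q.2 t (x t)) - q.1 (∑ t, embedT ψt hψc hψ1 t (x t))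
        map_add' := by
          intro q r
          funext x
          simp only [Prod.snd_add, Prod.fst_add, Pi.add_apply, Finset.sum_add_distrib]
          ring
        map_smul' := by
          intro c q
          funext x
          simp only [Prod.smul_snd, Prod.smul_fst, Pi.smul_apply, smul_eq_mul, RingHom.id_apply,
            mul_sub, Finset.mul_sum] }
    have hΦ : Continuous Φ := by
      change Continuous fun (q : (((∀ t, S t) →ᵇ (Fin d → ℝ)) → ℝ) ×
          (∀ t, (S t →ᵇ (Fin d → ℝ)) → ℝ)) (x : ∀ t, S t →ᵇ (Fin d → ℝ)) =>
        (∑ t, q.2 t (x t)) - q.1 (∑ t, embedT ψt hψc hψ1 t (x t))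
      fun_prop
    let P := (wPair (psiS ψt) '' Λ) ×ˢ Set.univ.pi fun t => wPair (ψt t) '' Λt t
    have hP : IsCompact P := hA.prod (isCompact_univ_pi hB)
    have hPconv : Convex ℝ P := (wPair_image_convex hψ hΛconv hΛM).prod
      (convex_pi fun t _ => wPair_image_convex (hψc t) (hΛtconv t) (hΛtM t))
    have hzero : (0 : (∀ t, S t →ᵇ (Fin d → ℝ)) → ℝ) ∈ Φ '' P := by
      refine zero_mem_of_support_nonneg (hP.image hΦ) (hPconv.linear_image Φ) ?_ ?_
      · rintro _ ⟨⟨a, b⟩, ⟨⟨m, hm, rfl⟩, hb⟩, rfl⟩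
        have hl := wPair_isLinear hψ (hΛM m hm)
        have hbl : ∀ t, IsLinearMap ℝ (b t) := by
          intro t
          obtain ⟨n, hn, hnb : wPair (ψt t) n = b t⟩ := hb t (Set.mem_univ t)
          exact hnb ▸ wPair_isLinear (hψc t) (hΛtM t n hn)
        constructor
        · intro x y
          change (∑ t, b t ((x + y) t)) - wPair (psiS ψt) m (∑ t, embedT ψt hψc hψ1 t ((x + y) t))
            = ((∑ t, b t (x t)) - wPair (psiS ψt) m (∑ t, embedT ψt hψc hψ1 t (x t))) +
              ((∑ t, b t (y t)) - wPair (psiS ψt) m (∑ t, embedT ψt hψc hψ1 t (y t)))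
          simp only [Pi.add_apply, (hbl _).map_add, (embedT_isLinear ψt hψc hψ1 _).map_add,
            Finset.sum_add_distrib, hl.map_add]
          ring
        · intro c x
          change (∑ t, b t ((c • x) t)) - wPair (psiS ψt) m (∑ t, embedT ψt hψc hψ1 t ((c • x) t))
            = c * ((∑ t, b t (x t)) - wPair (psiS ψt) m (∑ t, embedT ψt hψc hψ1 t (x t)))
          simp only [Pi.smul_apply, (hbl _).map_smul, (embedT_isLinear ψt hψc hψ1 _).map_smul,
            ← Finset.smul_sum, hl.map_smul, smul_eq_mul, ← Finset.mul_sum]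
          ring
      · intro x
        obtain ⟨m, hm, hmx⟩ := exists_iSup_eq hA hΛne (-(∑ t, embedT ψt hψc hψ1 t (x t)))
        choose n hn hnx using fun t => exists_iSup_eq (hB t) (hΛtne t) (x t)
        refine ⟨Φ (wPair (psiS ψt) m, fun t => wPair (ψt t) (n t)),
          ⟨_, ⟨⟨m, hm, rfl⟩, fun t _ => ⟨n t, hn t, rfl⟩⟩, rfl⟩, ?_⟩
        have h := H x
        simp only [hmx, hnx] at h
        rw [← ereal_coe_sum, ← EReal.coe_add, ← EReal.coe_zero, EReal.coe_le_coe_iff,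
          (wPair_isLinear hψ (hΛM m hm)).map_neg, ← sub_eq_add_neg] at h
        exact h
    obtain ⟨⟨a, b⟩, ⟨⟨m, hm, rfl⟩, hb⟩, hab⟩ := hzero
    refine ⟨m, hm, fun t => ?_⟩
    obtain ⟨n, hn, hnb : wPair (ψt t) n = b t⟩ := hb t (Set.mem_univ t)
    let _ := TopologicalSpace.upgradeIsCompletelyMetrizable (S t)
    have key : (fun i => (m i).map (fun s => s t)) = n := by
      refine map_eq_of_wPair ψt hψc hψ1 t fun x => ?_
      -- Test the vanishing functional on the family with the single nonzero entry `x` at `t`.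
      have h1 : (∑ r, b r ((Pi.single t x : ∀ r, S r →ᵇ (Fin d → ℝ)) r)) -
          wPair (psiS ψt) m (∑ r, embedT ψt hψc hψ1 r
            ((Pi.single t x : ∀ r, S r →ᵇ (Fin d → ℝ)) r)) = 0 :=
        congrFun hab (Pi.single t x)
      rw [Finset.sum_eq_single t, Finset.sum_eq_single t] at h1
      · simp only [Pi.single_eq_same, ← hnb] at h1
        linarith
      · intro r _ hr
        rw [Pi.single_eq_of_ne hr, (embedT_isLinear ψt hψc hψ1 r).map_zero]
      · simp
      · intro r _ hr
        obtain ⟨n', hn', hnb' : wPair (ψt r) n' = b r⟩ := hb r (Set.mem_univ r)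
        simp only [Pi.single_eq_of_ne hr]
        rw [← hnb', (wPair_isLinear (hψc r) (hΛtM r n' hn')).map_zero]
      · simp
    rw [key]
    exact hn

end
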